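/- arXiv:math/0506272 — 2 statements merged into one kernel-verified Lean document; each statement's English description precedes it below -/
import Mathlib

section
/- Let H be a quasi-Hopf algebra, B a right H-comodule algebra, and v : H → B a morphism of right H-comodule algebras. Define E : B → B by E(b) = v(q¹)b₍₀₎v(βS(q²b₍₁₎)), set A = E(B) with H-action h▷b = E(v(h)b) and multiplication a*a′ = E(aa′). Then the map θ : A → B^v, θ(a) = (p¹▷a)v(p²), where p_R = p¹⊗p² = x¹ ⊗ x²βS(x³), is an injective morphism of left H-module algebras from (A, *, 1_B, ▷) to B^v. -/
open TensorProduct BigOperators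

/-- A quasi-bialgebra in the sense of Drinfeld. -/
structure QuasiBialgebra (k H : Type*) [Field k] [Ring H] [Algebra k H] where
  comul : H →ₐ[k] H ⊗[k] H
  counit : H →ₐ[k] k
  Phi : H ⊗[k] (H ⊗[k] H)
  PhiInv : H ⊗[k] (H ⊗[k] H)
  Phi_mul_inv : Phi * PhiInv = 1
  inv_mul_Phi : PhiInv * Phi = 1
  comul_coassoc : ∀ h : H,
    (Algebra.TensorProduct.map (AlgHom.id k H) comul) (comul h)
      = Phi * (Algebra.TensorProduct.assoc k k k H H H)
          ((Algebra.TensorProduct.map comul (AlgHom.id k H)) (comul h)) * PhiInv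
  counit_comul_right : ∀ h : H,
    (Algebra.TensorProduct.map (AlgHom.id k H) counit) (comul h) = h ⊗ₜ[k] (1 : k)
  counit_comul_left : ∀ h : H,
    (Algebra.TensorProduct.map counit (AlgHom.id k H)) (comul h) = (1 : k) ⊗ₜ[k] h
  pentagon :
    ((1 : H) ⊗ₜ[k] Phi)
      * (Algebra.TensorProduct.map (AlgHom.id k H)
          (((Algebra.TensorProduct.assoc k k k H H H).toAlgHom).comp
            (Algebra.TensorProduct.map comul (AlgHom.id k H)))) Phi
      * (Algebra.TensorProduct.map (AlgHom.id k H)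
          (Algebra.TensorProduct.map (AlgHom.id k H)
            (Algebra.TensorProduct.includeLeft : H →ₐ[k] H ⊗[k] H))) Phi
    = (Algebra.TensorProduct.map (AlgHom.id k H)
          (Algebra.TensorProduct.map (AlgHom.id k H) comul)) Phi
      * (Algebra.TensorProduct.assoc k k k H H (H ⊗[k] H))
          ((Algebra.TensorProduct.map comul (AlgHom.id k (H ⊗[k] H))) Phi)
  counit_Phi : (Algebra.TensorProduct.map (AlgHom.id k H)
      (Algebra.TensorProduct.map counit (AlgHom.id k H))) Phi = 1

/-- A quasi-Hopf algebra: a quasi-bialgebra with antipode `S` (a bijective algebra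
anti-automorphism with inverse `Sinv`) and elements `alpha`, `beta`, normalized so that
`counit alpha = counit beta = 1`.  Identities involving Sweedler components are stated
universally over all finite representations of the relevant tensors. -/
structure QuasiHopfAlgebra (k H : Type*) [Field k] [Ring H] [Algebra k H] extends
    QuasiBialgebra k H where
  alpha : H
  beta : H
  S : H →ₗ[k] H
  Sinv : H →ₗ[k] H
  S_one : S 1 = 1
  S_mul : ∀ a b : H, S (a * b) = S b * S a
  Sinv_S : ∀ h : H, Sinv (S h) = h
  S_Sinv : ∀ h : H, S (Sinv h) = h
  antipode_left : ∀ h : H, ∀ (n : ℕ) (d1 d2 : Fin n → H),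
    comul h = ∑ i, d1 i ⊗ₜ[k] d2 i →
    ∑ i, S (d1 i) * alpha * d2 i = counit h • alpha
  antipode_right : ∀ h : H, ∀ (n : ℕ) (d1 d2 : Fin n → H),
    comul h = ∑ i, d1 i ⊗ₜ[k] d2 i →
    ∑ i, d1 i * beta * S (d2 i) = counit h • beta
  antipode_Phi : ∀ (n : ℕ) (X1 X2 X3 : Fin n → H),
    Phi = ∑ i, X1 i ⊗ₜ[k] (X2 i ⊗ₜ[k] X3 i) →
    ∑ i, X1 i * beta * S (X2 i) * alpha * X3 i = 1
  antipode_PhiInv : ∀ (n : ℕ) (x1 x2 x3 : Fin n → H),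
    PhiInv = ∑ i, x1 i ⊗ₜ[k] (x2 i ⊗ₜ[k] x3 i) →
    ∑ i, S (x1 i) * alpha * x2 i * beta * S (x3 i) = 1
  counit_alpha : counit alpha = 1
  counit_beta : counit beta = 1
/-- A right `H`-comodule algebra over a quasi-bialgebra `Q`. -/
structure RightComoduleAlgebra {k H : Type*} [Field k] [Ring H] [Algebra k H]
    (Q : QuasiBialgebra k H) (B : Type*) [Ring B] [Algebra k B] where
  coact : B →ₐ[k] B ⊗[k] H
  PhiRho : B ⊗[k] (H ⊗[k] H)
  PhiRhoInv : B ⊗[k] (H ⊗[k] H)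
  PhiRho_mul_inv : PhiRho * PhiRhoInv = 1
  inv_mul_PhiRho : PhiRhoInv * PhiRho = 1
  coact_coassoc : ∀ b : B,
    PhiRho * (Algebra.TensorProduct.assoc k k k B H H)
        ((Algebra.TensorProduct.map coact (AlgHom.id k H)) (coact b))
      = (Algebra.TensorProduct.map (AlgHom.id k B) Q.comul) (coact b) * PhiRho
  pentagon :
    ((1 : B) ⊗ₜ[k] Q.Phi)
      * (Algebra.TensorProduct.map (AlgHom.id k B)
          (((Algebra.TensorProduct.assoc k k k H H H).toAlgHom).comp
            (Algebra.TensorProduct.map Q.comul (AlgHom.id k H)))) PhiRho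
      * (Algebra.TensorProduct.map (AlgHom.id k B)
          (Algebra.TensorProduct.map (AlgHom.id k H)
            (Algebra.TensorProduct.includeLeft : H →ₐ[k] H ⊗[k] H))) PhiRho
    = (Algebra.TensorProduct.map (AlgHom.id k B)
          (Algebra.TensorProduct.map (AlgHom.id k H) Q.comul)) PhiRho
      * (Algebra.TensorProduct.assoc k k k B H (H ⊗[k] H))
          ((Algebra.TensorProduct.map coact (AlgHom.id k (H ⊗[k] H))) PhiRho)
  counit_coact : ∀ b : B,
    (Algebra.TensorProduct.map (AlgHom.id k B) Q.counit) (coact b) = b ⊗ₜ[k] (1 : k)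
  counit_PhiRho_mid : (Algebra.TensorProduct.map (AlgHom.id k B)
      (Algebra.TensorProduct.map Q.counit (AlgHom.id k H))) PhiRho = 1
  counit_PhiRho_right : (Algebra.TensorProduct.map (AlgHom.id k B)
      (Algebra.TensorProduct.map (AlgHom.id k H) Q.counit)) PhiRho = 1

/-- `v : H → B` is a morphism of right `H`-comodule algebras from `H` (with its canonical
right `H`-comodule algebra structure `ρ = Δ`, `Φ_ρ = Φ`) to `B`. -/
def IsComodAlgMorphismFromH {k H B : Type*} [Field k] [Ring H] [Algebra k H]
    [Ring B] [Algebra k B] {Q : QuasiBialgebra k H}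
    (R : RightComoduleAlgebra Q B) (v : H →ₐ[k] B) : Prop :=
  (∀ h : H, R.coact (v h) = (Algebra.TensorProduct.map v (AlgHom.id k H)) (Q.comul h))
  ∧ R.PhiRho = (Algebra.TensorProduct.map v (AlgHom.id k (H ⊗[k] H))) Q.Phi

/-- Characterization of the canonical projection `E : B → B`,
`E(b) = v(q¹) b₍₀₎ v(β S(q² b₍₁₎))`, where `q_R = q¹ ⊗ q² = X¹ ⊗ S⁻¹(α X³) X²`,
stated universally over finite representations of `Φ` and of `ρ(b)`. -/
def IsCanonicalProjection {k H B : Type*} [Field k] [Ring H] [Algebra k H]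
    [Ring B] [Algebra k B] (Q : QuasiHopfAlgebra k H)
    (R : RightComoduleAlgebra Q.toQuasiBialgebra B) (v : H →ₐ[k] B) (E : B →ₗ[k] B) : Prop :=
  ∀ (b : B) (n : ℕ) (X1 X2 X3 : Fin n → H),
    Q.Phi = ∑ i, X1 i ⊗ₜ[k] (X2 i ⊗ₜ[k] X3 i) →
    ∀ (p : ℕ) (b0 : Fin p → B) (b1 : Fin p → H),
      R.coact b = ∑ j, b0 j ⊗ₜ[k] b1 j →
      E b = ∑ i, ∑ j,
        v (X1 i) * b0 j * v (Q.beta * Q.S (Q.Sinv (Q.alpha * X3 i) * X2 i * b1 j))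

/-!
The algebra `B ⊗ H` acts on `B` by `(b ⊗ h) ⬝ t = b t v(S(h))`. Put
`Ē(b) = ρ(b) ⬝ v(β) = b₍₀₎ v(β S(b₍₁₎))`, so that `Ē(a b) = ρ(a) ⬝ Ē(b)`. As `v` is a comodule
morphism, `Ē(v(h) b) = v(h₁) Ē(b) v(S(h₂))` and `Ē(b v(h)) = ε(h) Ē(b)`. Contracting with `S` and
`α` absorbs a comultiplication multiplied on the left, contracting with `S` and `β` one multiplied
on the right, so suitable rearrangements of the pentagon collapse to the two antipode axioms for
`Φ`. Three such collapses prove the theorem.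

* Since `E(b) = v(X¹) Ē(b) v(S(X²) α X³)`, the first one gives `θ = Ē`.
* The second one gives `(Ē ⊗ id)(ρ(E(b))) = Ē(b) ⊗ 1`, hence `Ē ∘ E = Ē`. As `E` is determined by
  `Ē`, it is idempotent and `Ē` is injective on its range.
* For `a` in the range of `E`, the third one rewrites `ρ(a) ⬝ Ē(a')` in terms of
  `(ρ ⊗ id)(ρ(a))`, and `(Ē ⊗ id)(ρ(a)) = Ē(a) ⊗ 1` turns the result into `Ē(a) ∘ Ē(a')`.
-/

-- Instance search on fourfold tensor products exceeds the default depth.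
set_option maxSynthPendingDepth 6

namespace QuasiHopf

theorem pentagon_rearrangements {G : Type*} [Group G] {a b c d e : G} (h : a * b * c = d * e) :
    c * e⁻¹ = b⁻¹ * a⁻¹ * d ∧ e * c⁻¹ = d⁻¹ * a * b ∧ a⁻¹ * d = b * c * e⁻¹ := by
  obtain rfl : d = a * b * c * e⁻¹ := eq_mul_inv_of_mul_eq h.symm
  refine ⟨?_, ?_, ?_⟩ <;> group

section TensorProducts

variable {k A A' A'' B C D M N : Type*} [CommSemiring k]
  [AddCommMonoid M] [Module k M] [AddCommMonoid N] [Module k N]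

theorem exists_sum_tmul_tmul_eq {P : Type*} [AddCommMonoid P] [Module k P]
    (x : M ⊗[k] (N ⊗[k] P)) :
    ∃ (n : ℕ) (a : Fin n → M) (b : Fin n → N) (c : Fin n → P),
      x = ∑ i, a i ⊗ₜ[k] (b i ⊗ₜ[k] c i) := by
  induction x with
  | zero => exact ⟨0, Fin.elim0, Fin.elim0, Fin.elim0, by simp⟩
  | tmul a y =>
    obtain ⟨n, b, c, rfl⟩ := TensorProduct.exists_sum_tmul_eq y
    exact ⟨n, fun _ => a, b, c, tmul_sum ..⟩
  | add x y hx hy =>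
    obtain ⟨n, a, b, c, rfl⟩ := hx
    obtain ⟨m, a', b', c', rfl⟩ := hy
    exact ⟨n + m, Fin.append a a', Fin.append b b', Fin.append c c',
      by simp [Fin.sum_univ_add, Fin.append_left, Fin.append_right]⟩

variable [Semiring A] [Algebra k A] [Semiring A'] [Algebra k A'] [Semiring A''] [Algebra k A'']
  [Semiring B] [Algebra k B] [Semiring C] [Algebra k C] [Semiring D] [Algebra k D]

/-- The algebra map `id ⊗ f`, with the identity acting on `D`. -/
noncomputable abbrev idTensor (D : Type*) [Semiring D] [Algebra k D] (f : A →ₐ[k] C) :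
    D ⊗[k] A →ₐ[k] D ⊗[k] C :=
  Algebra.TensorProduct.map (AlgHom.id k D) f

/-- The algebra map `f ⊗ id`, with the identity acting on `D`. -/
noncomputable abbrev tensorId (D : Type*) [Semiring D] [Algebra k D] (f : A →ₐ[k] C) :
    A ⊗[k] D →ₐ[k] C ⊗[k] D :=
  Algebra.TensorProduct.map f (AlgHom.id k D)

/-- The algebra map `f ⊗ id` for an `f` with values in a tensor product, followed by the
rebracketing `(A' ⊗ A'') ⊗ D = A' ⊗ (A'' ⊗ D)`. -/
noncomputable def splitLeft (D : Type*) [Semiring D] [Algebra k D] (f : A →ₐ[k] A' ⊗[k] A'') :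
    A ⊗[k] D →ₐ[k] A' ⊗[k] (A'' ⊗[k] D) :=
  (Algebra.TensorProduct.assoc k k k A' A'' D).toAlgHom.comp (tensorId D f)

theorem splitLeft_tmul (f : A →ₐ[k] A' ⊗[k] A'') (a : A) (d : D) :
    splitLeft D f (a ⊗ₜ d) = Algebra.TensorProduct.assoc k k k A' A'' D (f a ⊗ₜ d) := by
  simp [splitLeft]

theorem idTensor_idTensor_comp_splitLeft (f : C →ₐ[k] D) (g : A →ₐ[k] A' ⊗[k] A'') :
    (idTensor A' (idTensor A'' f)).comp (splitLeft C g) = (splitLeft D g).comp (idTensor A f) := by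
  have h (x : A' ⊗[k] A'') (c : C) : idTensor A' (idTensor A'' f)
      (Algebra.TensorProduct.assoc k k k A' A'' C (x ⊗ₜ c)) =
      Algebra.TensorProduct.assoc k k k A' A'' D (x ⊗ₜ f c) := by
    induction x with
    | zero => simp
    | add x y hx hy => simp only [map_add, add_tmul, hx, hy]
    | tmul a b => simp
  refine Algebra.TensorProduct.ext' fun a c => ?_
  simp [splitLeft_tmul, h]

theorem splitLeft_comp (f : A →ₐ[k] A' ⊗[k] A'') (g : B →ₐ[k] A) :
    splitLeft D (f.comp g) = (splitLeft D f).comp (tensorId D g) := by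
  refine Algebra.TensorProduct.ext' fun b d => ?_
  simp [splitLeft_tmul]

theorem tensorId_comp_splitLeft (f : A →ₐ[k] A' ⊗[k] A'') (g : A' →ₐ[k] B) :
    (tensorId (A'' ⊗[k] D) g).comp (splitLeft D f) = splitLeft D ((tensorId A'' g).comp f) := by
  have h (x : A' ⊗[k] A'') (d : D) : tensorId (A'' ⊗[k] D) g
      (Algebra.TensorProduct.assoc k k k A' A'' D (x ⊗ₜ d)) =
      Algebra.TensorProduct.assoc k k k B A'' D (tensorId A'' g x ⊗ₜ d) := by
    induction x with
    | zero => simp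
    | add x y hx hy => simp only [map_add, add_tmul, hx, hy]
    | tmul a b => simp
  refine Algebra.TensorProduct.ext' fun a d => ?_
  simp [splitLeft_tmul, h]

theorem splitLeft_comp_includeLeft (f : A →ₐ[k] A' ⊗[k] A'') :
    (splitLeft D f).comp Algebra.TensorProduct.includeLeft =
      (idTensor A' Algebra.TensorProduct.includeLeft).comp f := by
  have h (x : A' ⊗[k] A'') : Algebra.TensorProduct.assoc k k k A' A'' D (x ⊗ₜ 1) =
      idTensor A' Algebra.TensorProduct.includeLeft x := by
    induction x with
    | zero => simp
    | add x y hx hy => simp only [map_add, add_tmul, hx, hy]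
    | tmul a b => simp
  ext a
  simp [splitLeft_tmul, h]

theorem idTensor_tensorId (f : A →ₐ[k] B) (g : C →ₐ[k] D) (x : A ⊗[k] C) :
    idTensor B g (tensorId C f x) = tensorId D f (idTensor A g x) := by
  simp only [← AlgHom.comp_apply, ← Algebra.TensorProduct.map_comp, AlgHom.id_comp, AlgHom.comp_id]

/-- The linear map `a ⊗ b ↦ a * c * b`. -/
noncomputable def mulThrough (c : C) : C ⊗[k] C →ₗ[k] C :=
  LinearMap.mul' k C ∘ₗ (LinearMap.mulRight k c).rTensor C

@[simp]
theorem mulThrough_tmul (c a b : C) : mulThrough (k := k) c (a ⊗ₜ b) = a * c * b := rfl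

/-- The linear map `a ⊗ b ↦ v(a) * c * v(b)`. -/
noncomputable def sandwich (v : A →ₐ[k] C) (c : C) : A ⊗[k] A →ₗ[k] C :=
  mulThrough c ∘ₗ TensorProduct.map v.toLinearMap v.toLinearMap

@[simp]
theorem sandwich_tmul (v : A →ₐ[k] C) (c : C) (a b : A) :
    sandwich v c (a ⊗ₜ b) = v a * c * v b := rfl

/-- The linear map `κ ⊗ id` on `A' ⊗ (A'' ⊗ D)`, for a `κ` defined on `A' ⊗ A''`. -/
noncomputable def rTensorAssoc (D : Type*) [Semiring D] [Algebra k D]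
    (κ : A' ⊗[k] A'' →ₗ[k] M) : A' ⊗[k] (A'' ⊗[k] D) →ₗ[k] M ⊗[k] D :=
  κ.rTensor D ∘ₗ (TensorProduct.assoc k A' A'' D).symm.toLinearMap

@[simp]
theorem rTensorAssoc_assoc (κ : A' ⊗[k] A'' →ₗ[k] M) (x : A' ⊗[k] A'') (d : D) :
    rTensorAssoc D κ (Algebra.TensorProduct.assoc k k k A' A'' D (x ⊗ₜ d)) = κ x ⊗ₜ d :=
  congrArg (κ.rTensor D) ((TensorProduct.assoc k A' A'' D).symm_apply_apply (x ⊗ₜ d))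

@[simp]
theorem rTensorAssoc_tmul (κ : A' ⊗[k] A'' →ₗ[k] M) (a : A') (b : A'') (d : D) :
    rTensorAssoc D κ (a ⊗ₜ (b ⊗ₜ d)) = κ (a ⊗ₜ b) ⊗ₜ d := rfl

/-- The linear map `κ` does not distinguish left multiplication by values of `f` from left
multiplication by values of `g`. -/
def EqualizesLeft (κ : C →ₗ[k] M) (f g : A →ₐ[k] C) : Prop :=
  ∀ a c, κ (f a * c) = κ (g a * c)

/-- The linear map `κ` does not distinguish right multiplication by values of `f` from right
multiplication by values of `g`. -/
def EqualizesRight (κ : C →ₗ[k] M) (f g : A →ₐ[k] C) : Prop :=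
  ∀ a c, κ (c * f a) = κ (c * g a)

namespace EqualizesLeft

variable {κ : C →ₗ[k] M} {f g : A →ₐ[k] C}

theorem comp (h : EqualizesLeft κ f g) (φ : M →ₗ[k] N) : EqualizesLeft (φ ∘ₗ κ) f g :=
  fun a c => congrArg φ (h a c)

theorem lTensor (h : EqualizesLeft κ f g) :
    EqualizesLeft (κ.lTensor D) (idTensor D f) (idTensor D g) := by
  intro x c
  induction x with
  | zero => simp
  | add x y hx hy => simp only [map_add, add_mul, hx, hy]
  | tmul d a =>
    induction c with
    | zero => simp
    | add x y hx hy => simp only [map_add, mul_add, hx, hy]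
    | tmul e b => simp [h a b]

theorem rTensorAssoc {κ : A' ⊗[k] A'' →ₗ[k] M} {f g : A →ₐ[k] A' ⊗[k] A''}
    (h : EqualizesLeft κ f g) :
    EqualizesLeft (rTensorAssoc D κ) (splitLeft D f) (splitLeft D g) := by
  intro x c
  obtain ⟨c, rfl⟩ := (Algebra.TensorProduct.assoc k k k A' A'' D).surjective c
  induction x with
  | zero => simp
  | add x y hx hy => simp only [map_add, add_mul, hx, hy]
  | tmul a d =>
    induction c with
    | zero => simp
    | add x y hx hy => simp only [map_add, mul_add, hx, hy]
    | tmul b e =>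
      simp only [splitLeft_tmul, ← map_mul, Algebra.TensorProduct.tmul_mul_tmul,
        rTensorAssoc_assoc, h a b]

end EqualizesLeft

namespace EqualizesRight

variable {κ : C →ₗ[k] M} {f g : A →ₐ[k] C}

theorem comp (h : EqualizesRight κ f g) (φ : M →ₗ[k] N) : EqualizesRight (φ ∘ₗ κ) f g :=
  fun a c => congrArg φ (h a c)

theorem lTensor (h : EqualizesRight κ f g) :
    EqualizesRight (κ.lTensor D) (idTensor D f) (idTensor D g) := by
  intro x c
  induction x with
  | zero => simp
  | add x y hx hy => simp only [map_add, mul_add, hx, hy]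
  | tmul d a =>
    induction c with
    | zero => simp
    | add x y hx hy => simp only [map_add, add_mul, hx, hy]
    | tmul e b => simp [h a b]

theorem rTensor (h : EqualizesRight κ f g) :
    EqualizesRight (κ.rTensor D) (tensorId D f) (tensorId D g) := by
  intro x c
  induction x with
  | zero => simp
  | add x y hx hy => simp only [map_add, mul_add, hx, hy]
  | tmul a d =>
    induction c with
    | zero => simp
    | add x y hx hy => simp only [map_add, add_mul, hx, hy]
    | tmul b e => simp [h a b]

theorem rTensorAssoc {κ : A' ⊗[k] A'' →ₗ[k] M} {f g : A →ₐ[k] A' ⊗[k] A''}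
    (h : EqualizesRight κ f g) :
    EqualizesRight (rTensorAssoc D κ) (splitLeft D f) (splitLeft D g) := by
  intro x c
  obtain ⟨c, rfl⟩ := (Algebra.TensorProduct.assoc k k k A' A'' D).surjective c
  induction x with
  | zero => simp
  | add x y hx hy => simp only [map_add, mul_add, hx, hy]
  | tmul a d =>
    induction c with
    | zero => simp
    | add x y hx hy => simp only [map_add, add_mul, hx, hy]
    | tmul b e =>
      simp only [splitLeft_tmul, ← map_mul, Algebra.TensorProduct.tmul_mul_tmul,
        rTensorAssoc_assoc, h a b]

end EqualizesRight

end TensorProducts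

end QuasiHopf

namespace QuasiBialgebra

open QuasiHopf

variable {k H C C' D : Type*} [Field k] [Ring H] [Algebra k H] (Q : QuasiBialgebra k H)
  [Semiring C] [Algebra k C] [Semiring C'] [Algebra k C'] [Semiring D] [Algebra k D]

/-- The algebra map `h ↦ ε(h) 1`. -/
noncomputable def scalarCounit (C : Type*) [Semiring C] [Algebra k C] : H →ₐ[k] C :=
  (Algebra.ofId k C).comp Q.counit

theorem scalarCounit_apply (h : H) : Q.scalarCounit C h = Q.counit h • 1 :=
  Algebra.algebraMap_eq_smul_one _

/-- The algebra map `ε ⊗ id : H ⊗ D → k ⊗ D = D`. -/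
noncomputable def counitLeft (D : Type*) [Semiring D] [Algebra k D] : H ⊗[k] D →ₐ[k] D :=
  (Algebra.TensorProduct.lid k D).toAlgHom.comp (tensorId D Q.counit)

/-- The algebra map `id ⊗ ε : D ⊗ H → D ⊗ k = D`. -/
noncomputable def counitRight (D : Type*) [Semiring D] [Algebra k D] : D ⊗[k] H →ₐ[k] D :=
  (Algebra.TensorProduct.rid k k D).toAlgHom.comp (idTensor D Q.counit)

@[simp]
theorem counitLeft_tmul (h : H) (d : D) : Q.counitLeft D (h ⊗ₜ d) = Q.counit h • d := by
  simp [counitLeft]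

@[simp]
theorem counitRight_tmul (d : D) (h : H) : Q.counitRight D (d ⊗ₜ h) = Q.counit h • d := by
  simp [counitRight]

theorem counitLeft_comp_comul : (Q.counitLeft H).comp Q.comul = AlgHom.id k H := by
  ext h
  simp [counitLeft, Q.counit_comul_left]

theorem counitRight_comp_comul : (Q.counitRight H).comp Q.comul = AlgHom.id k H := by
  ext h
  simp [counitRight, Q.counit_comul_right]

theorem counitLeft_comp_idTensor (f : C →ₐ[k] D) :
    (Q.counitLeft D).comp (idTensor H f) = f.comp (Q.counitLeft C) := by
  ext <;> simp

theorem counitLeft_comp_includeLeft :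
    (Q.counitLeft D).comp Algebra.TensorProduct.includeLeft = Q.scalarCounit D := by
  ext h
  simp [scalarCounit_apply]

theorem counitRight_comp_includeLeft :
    (Q.counitRight D).comp Algebra.TensorProduct.includeLeft = AlgHom.id k D := by
  ext d
  simp

theorem comp_scalarCounit (f : C →ₐ[k] D) :
    f.comp (Q.scalarCounit C) = Q.scalarCounit D := by
  ext h
  simp [scalarCounit_apply]

theorem counitLeft_comp_splitLeft (f : C →ₐ[k] H ⊗[k] C') :
    (Q.counitLeft (C' ⊗[k] D)).comp (splitLeft D f) = tensorId D ((Q.counitLeft C').comp f) := by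
  have h (x : H ⊗[k] C') (d : D) : Q.counitLeft (C' ⊗[k] D)
      (Algebra.TensorProduct.assoc k k k H C' D (x ⊗ₜ d)) = Q.counitLeft C' x ⊗ₜ d := by
    induction x with
    | zero => simp
    | add x y hx hy => simp only [map_add, add_tmul, hx, hy]
    | tmul a b => simp [smul_tmul']
  refine Algebra.TensorProduct.ext' fun c d => ?_
  simp [splitLeft_tmul, h]

theorem idTensor_counitLeft_comp_splitLeft (f : C →ₐ[k] C' ⊗[k] H) :
    (idTensor C' (Q.counitLeft D)).comp (splitLeft D f) =
      tensorId D ((Q.counitRight C').comp f) := by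
  have h (x : C' ⊗[k] H) (d : D) : idTensor C' (Q.counitLeft D)
      (Algebra.TensorProduct.assoc k k k C' H D (x ⊗ₜ d)) = Q.counitRight C' x ⊗ₜ d := by
    induction x with
    | zero => simp
    | add x y hx hy => simp only [map_add, add_tmul, hx, hy]
    | tmul a b => simp [smul_tmul]
  refine Algebra.TensorProduct.ext' fun c d => ?_
  simp [splitLeft_tmul, h]

theorem tensorId_scalarCounit :
    tensorId D (Q.scalarCounit C) =
      Algebra.TensorProduct.includeRight.comp (Q.counitLeft D) := by
  refine Algebra.TensorProduct.ext' fun h d => ?_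
  simp [scalarCounit_apply, ← smul_tmul']

theorem splitLeft_scalarCounit :
    splitLeft D (Q.scalarCounit (C ⊗[k] C')) =
      (Algebra.TensorProduct.includeRight.comp Algebra.TensorProduct.includeRight).comp
        (Q.counitLeft D) := by
  refine Algebra.TensorProduct.ext' fun h d => ?_
  simp [splitLeft_tmul, scalarCounit_apply, Algebra.TensorProduct.one_def, ← smul_tmul']

theorem idTensor_scalarCounit :
    idTensor D (Q.scalarCounit C) =
      Algebra.TensorProduct.includeLeft.comp (Q.counitRight D) := by
  refine Algebra.TensorProduct.ext' fun d h => ?_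
  simp [scalarCounit_apply]

/-- The reassociator as a unit. -/
def phiUnit : (H ⊗[k] (H ⊗[k] H))ˣ :=
  ⟨Q.Phi, Q.PhiInv, Q.Phi_mul_inv, Q.inv_mul_Phi⟩

theorem PhiInv_mul_idTensor_comul (h : H) :
    Q.PhiInv * idTensor H Q.comul (Q.comul h) = splitLeft H Q.comul (Q.comul h) * Q.PhiInv := by
  rw [Q.comul_coassoc, ← mul_assoc, ← mul_assoc, Q.inv_mul_Phi, one_mul]
  rfl

theorem map_PhiInv_eq_one {f : H ⊗[k] (H ⊗[k] H) →ₐ[k] C} (h : f Q.Phi = 1) :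
    f Q.PhiInv = 1 := by
  simpa [h] using congrArg f Q.Phi_mul_inv

theorem map_pentagon (f : H ⊗[k] (H ⊗[k] (H ⊗[k] H)) →ₐ[k] C) :
    f ((1 : H) ⊗ₜ Q.Phi) * f.comp (idTensor H (splitLeft H Q.comul)) Q.Phi *
        f.comp (idTensor H (idTensor H Algebra.TensorProduct.includeLeft)) Q.Phi =
      f.comp (idTensor H (idTensor H Q.comul)) Q.Phi *
        f.comp (splitLeft (H ⊗[k] H) Q.comul) Q.Phi := by
  have h := congrArg f Q.pentagon
  rw [map_mul, map_mul, map_mul] at h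
  exact h

theorem isUnit_Phi : IsUnit Q.Phi :=
  Q.phiUnit.isUnit

theorem idTensor_counitLeft_Phi : idTensor H (Q.counitLeft H) Q.Phi = 1 := by
  simp only [counitLeft, Algebra.TensorProduct.map_id_comp,
    AlgHom.comp_apply, Q.counit_Phi, map_one]

theorem counitLeft_Phi : Q.counitLeft (H ⊗[k] H) Q.Phi = 1 := by
  have h := Q.map_pentagon (idTensor H (Q.counitLeft (H ⊗[k] H)))
  simp only [← Algebra.TensorProduct.map_id_comp, counitLeft_comp_splitLeft, counitLeft_comp_comul,
    counitLeft_comp_idTensor, idTensor_counitLeft_comp_splitLeft, counitRight_comp_comul] at h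
  simp only [Algebra.TensorProduct.map_id_comp, AlgHom.comp_apply, idTensor_counitLeft_Phi,
    map_one, mul_one, one_mul, Algebra.TensorProduct.map_id, AlgHom.id_apply] at h
  have := congrArg (Q.counitLeft _) (Q.isUnit_Phi.mul_eq_right.mp h)
  simpa using this

theorem idTensor_counitRight_Phi : idTensor H (Q.counitRight H) Q.Phi = 1 := by
  have h := Q.map_pentagon (idTensor H (idTensor H (Q.counitLeft H)))
  simp only [← Algebra.TensorProduct.map_id_comp, idTensor_idTensor_comp_splitLeft,
    counitLeft_comp_comul, idTensor_counitLeft_comp_splitLeft, counitRight_comp_comul,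
    counitLeft_comp_includeLeft, idTensor_scalarCounit] at h
  simp only [Algebra.TensorProduct.map_id_comp, AlgHom.comp_apply, idTensor_counitLeft_Phi,
    map_one, mul_one, Algebra.TensorProduct.map_id, AlgHom.id_apply,
    Algebra.TensorProduct.map_tmul, ← Algebra.TensorProduct.one_def, one_mul] at h
  have := congrArg (idTensor H (Q.counitRight H)) (Q.isUnit_Phi.mul_eq_left.mp h)
  rwa [map_one, ← AlgHom.comp_apply, ← Algebra.TensorProduct.map_id_comp,
    counitRight_comp_includeLeft, Algebra.TensorProduct.map_id] at this

theorem splitLeft_scalarCounit_Phi :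
    splitLeft (H ⊗[k] H) (Q.scalarCounit (C ⊗[k] C')) Q.Phi = 1 := by
  rw [splitLeft_scalarCounit, AlgHom.comp_apply, counitLeft_Phi, map_one]

theorem idTensor_splitLeft_scalarCounit_Phi :
    idTensor H (splitLeft H (Q.scalarCounit (C ⊗[k] C'))) Q.Phi = 1 := by
  rw [splitLeft_scalarCounit]
  simp only [Algebra.TensorProduct.map_id_comp, AlgHom.comp_apply, idTensor_counitLeft_Phi, map_one]

theorem idTensor_idTensor_scalarCounit_Phi :
    idTensor H (idTensor H (Q.scalarCounit C)) Q.Phi = 1 := by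
  rw [idTensor_scalarCounit]
  simp only [Algebra.TensorProduct.map_id_comp, AlgHom.comp_apply, idTensor_counitRight_Phi,
    map_one]

theorem pentagon_units :
    Units.map (Algebra.TensorProduct.includeRight : _ →ₐ[k] H ⊗[k] _).toMonoidHom Q.phiUnit *
      Units.map (idTensor H (splitLeft H Q.comul)).toMonoidHom Q.phiUnit *
      Units.map (idTensor H (idTensor H
        (Algebra.TensorProduct.includeLeft : _ →ₐ[k] _ ⊗[k] H))).toMonoidHom Q.phiUnit =
    Units.map (idTensor H (idTensor H Q.comul)).toMonoidHom Q.phiUnit *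
      Units.map (splitLeft (H ⊗[k] H) Q.comul).toMonoidHom Q.phiUnit :=
  Units.ext Q.pentagon

theorem pentagon_slot123_mul_inv :
    idTensor H (idTensor H Algebra.TensorProduct.includeLeft) Q.Phi *
        splitLeft (H ⊗[k] H) Q.comul Q.PhiInv =
      idTensor H (splitLeft H Q.comul) Q.PhiInv * (1 : H) ⊗ₜ Q.PhiInv *
        idTensor H (idTensor H Q.comul) Q.Phi :=
  congrArg Units.val (pentagon_rearrangements Q.pentagon_units).1

theorem pentagon_comulLeft_mul_inv :
    splitLeft (H ⊗[k] H) Q.comul Q.Phi *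
        idTensor H (idTensor H Algebra.TensorProduct.includeLeft) Q.PhiInv =
      idTensor H (idTensor H Q.comul) Q.PhiInv * (1 : H) ⊗ₜ Q.Phi *
        idTensor H (splitLeft H Q.comul) Q.Phi :=
  congrArg Units.val (pentagon_rearrangements Q.pentagon_units).2.1

theorem pentagon_inv_slot234_mul :
    (1 : H) ⊗ₜ Q.PhiInv * idTensor H (idTensor H Q.comul) Q.Phi =
      idTensor H (splitLeft H Q.comul) Q.Phi *
        idTensor H (idTensor H Algebra.TensorProduct.includeLeft) Q.Phi *
        splitLeft (H ⊗[k] H) Q.comul Q.PhiInv :=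
  congrArg Units.val (pentagon_rearrangements Q.pentagon_units).2.2

end QuasiBialgebra

namespace RightComoduleAlgebra

open QuasiHopf

variable {k H B : Type*} [Field k] [Ring H] [Algebra k H] [Ring B] [Algebra k B]
  {Q : QuasiBialgebra k H} (R : RightComoduleAlgebra Q B) {v : H →ₐ[k] B}

theorem counitRight_coact (b : B) : Q.counitRight B (R.coact b) = b := by
  simp [QuasiBialgebra.counitRight, R.counit_coact]

theorem idTensor_scalarCounit_coact {C : Type*} [Semiring C] [Algebra k C] (b : B) :
    idTensor B (Q.scalarCounit C) (R.coact b) = b ⊗ₜ 1 := by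
  rw [Q.idTensor_scalarCounit, AlgHom.comp_apply, counitRight_coact]
  rfl

theorem idTensor_splitLeft_scalarCounit_coact (b : B) :
    idTensor B (splitLeft H (Q.scalarCounit (H ⊗[k] H)))
      (idTensor B Algebra.TensorProduct.includeLeft (R.coact b)) = b ⊗ₜ 1 := by
  rw [← AlgHom.comp_apply, ← Algebra.TensorProduct.map_id_comp, splitLeft_comp_includeLeft,
    Q.comp_scalarCounit, idTensor_scalarCounit_coact]

variable {R}

theorem tensorId_Phi_mul_splitLeft_coact (hv : IsComodAlgMorphismFromH R v) (b : B) :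
    tensorId (H ⊗[k] H) v Q.Phi * splitLeft H R.coact (R.coact b) =
      idTensor B Q.comul (R.coact b) * tensorId (H ⊗[k] H) v Q.Phi :=
  hv.2 ▸ R.coact_coassoc b

theorem splitLeft_coact_coact (hv : IsComodAlgMorphismFromH R v) (b : B) :
    splitLeft H R.coact (R.coact b) = tensorId (H ⊗[k] H) v Q.PhiInv *
      idTensor B Q.comul (R.coact b) * tensorId (H ⊗[k] H) v Q.Phi := by
  rw [mul_assoc, ← tensorId_Phi_mul_splitLeft_coact hv, ← mul_assoc, ← map_mul, Q.inv_mul_Phi,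
    map_one, one_mul]

theorem splitLeft_coact_comp_tensorId (hv : IsComodAlgMorphismFromH R v)
    {D : Type*} [Semiring D] [Algebra k D] :
    (splitLeft D R.coact).comp (tensorId D v) =
      (tensorId (H ⊗[k] D) v).comp (splitLeft D Q.comul) := by
  rw [← splitLeft_comp, tensorId_comp_splitLeft]
  exact congrArg (splitLeft D) (AlgHom.ext hv.1)

theorem splitLeft_coact_tensorId_Phi_mul (hv : IsComodAlgMorphismFromH R v) (b : B) :
    splitLeft (H ⊗[k] H) R.coact (tensorId _ v Q.Phi *
        idTensor B Algebra.TensorProduct.includeLeft (R.coact b)) =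
      tensorId _ v (splitLeft (H ⊗[k] H) Q.comul Q.Phi *
          idTensor H (idTensor H Algebra.TensorProduct.includeLeft) Q.PhiInv) *
        idTensor B (splitLeft H Q.comul)
          (idTensor B Algebra.TensorProduct.includeLeft (R.coact b)) *
        tensorId _ v (idTensor H (idTensor H Algebra.TensorProduct.includeLeft) Q.Phi) := by
  have slot123_comul (x : B ⊗[k] H) :
      idTensor B (idTensor H Algebra.TensorProduct.includeLeft) (idTensor B Q.comul x) =
        idTensor B (splitLeft H Q.comul) (idTensor B Algebra.TensorProduct.includeLeft x) := by
    simp only [← AlgHom.comp_apply, ← Algebra.TensorProduct.map_id_comp,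
      splitLeft_comp_includeLeft]
  rw [map_mul, ← AlgHom.comp_apply, splitLeft_coact_comp_tensorId hv, AlgHom.comp_apply,
    ← AlgHom.comp_apply (splitLeft _ R.coact), ← idTensor_idTensor_comp_splitLeft,
    AlgHom.comp_apply, splitLeft_coact_coact hv]
  simp only [map_mul, idTensor_tensorId, slot123_comul, mul_assoc]

theorem tensorId_PhiInv_mul_splitLeft_coact (hv : IsComodAlgMorphismFromH R v) (b : B) :
    tensorId _ v ((1 : H) ⊗ₜ Q.PhiInv * idTensor H (idTensor H Q.comul) Q.Phi) *
        idTensor B (idTensor H Q.comul) (splitLeft H R.coact (R.coact b)) =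
      idTensor B (splitLeft H Q.comul) (idTensor B Q.comul (R.coact b)) *
        tensorId _ v ((1 : H) ⊗ₜ Q.PhiInv * idTensor H (idTensor H Q.comul) Q.Phi) := by
  have coassoc (x : B ⊗[k] H) :
      tensorId _ v ((1 : H) ⊗ₜ Q.PhiInv) * idTensor B (idTensor H Q.comul) (idTensor B Q.comul x) =
        idTensor B (splitLeft H Q.comul) (idTensor B Q.comul x) *
          tensorId _ v ((1 : H) ⊗ₜ Q.PhiInv) := by
    induction x with
    | zero => simp
    | add x₁ x₂ h₁ h₂ => simp only [map_add, mul_add, add_mul, h₁, h₂]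
    | tmul b h => simp [Q.PhiInv_mul_idTensor_comul]
  rw [map_mul, mul_assoc, ← idTensor_tensorId, ← map_mul (idTensor B (idTensor H Q.comul)),
    tensorId_Phi_mul_splitLeft_coact hv, map_mul, ← mul_assoc, coassoc, mul_assoc]

end RightComoduleAlgebra

namespace QuasiHopfAlgebra

open QuasiHopf

section Contractions

variable {k H : Type*} [Field k] [Ring H] [Algebra k H] (Q : QuasiHopfAlgebra k H)

/-- The contraction `a ⊗ b ↦ S(a) α b`. -/
noncomputable def contractAlpha : H ⊗[k] H →ₗ[k] H :=
  mulThrough Q.alpha ∘ₗ Q.S.rTensor H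

/-- The contraction `a ⊗ b ↦ a β S(b)`. -/
noncomputable def contractBeta : H ⊗[k] H →ₗ[k] H :=
  mulThrough Q.beta ∘ₗ Q.S.lTensor H

/-- The contraction `a ⊗ b ⊗ c ↦ S(a) α b β S(c)`. -/
noncomputable def contractAlphaBeta : H ⊗[k] (H ⊗[k] H) →ₗ[k] H :=
  Q.contractAlpha ∘ₗ Q.contractBeta.lTensor H

/-- The contraction `a ⊗ b ⊗ c ↦ a β S(b) α c`. -/
noncomputable def contractBetaAlpha : H ⊗[k] (H ⊗[k] H) →ₗ[k] H :=
  mulThrough Q.beta ∘ₗ Q.contractAlpha.lTensor H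

/-- The contraction `a ⊗ b ⊗ c ⊗ d ↦ a β S(b) α c ⊗ d`. -/
noncomputable def contractBetaAlphaLeft : H ⊗[k] (H ⊗[k] (H ⊗[k] H)) →ₗ[k] H ⊗[k] H :=
  rTensorAssoc H (mulThrough Q.beta) ∘ₗ (rTensorAssoc H Q.contractAlpha).lTensor H

@[simp]
theorem contractAlpha_tmul (a b : H) : Q.contractAlpha (a ⊗ₜ b) = Q.S a * Q.alpha * b := rfl

@[simp]
theorem contractBeta_tmul (a b : H) : Q.contractBeta (a ⊗ₜ b) = a * Q.beta * Q.S b := rfl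

@[simp]
theorem contractAlphaBeta_tmul (a b c : H) :
    Q.contractAlphaBeta (a ⊗ₜ (b ⊗ₜ c)) = Q.S a * Q.alpha * b * Q.beta * Q.S c := by
  simp [contractAlphaBeta, mul_assoc]

@[simp]
theorem contractBetaAlpha_tmul (a b c : H) :
    Q.contractBetaAlpha (a ⊗ₜ (b ⊗ₜ c)) = a * Q.beta * Q.S b * Q.alpha * c := by
  simp [contractBetaAlpha, mul_assoc]

theorem contractAlphaBeta_eq_comp_rTensorAssoc :
    Q.contractAlphaBeta = Q.contractBeta ∘ₗ rTensorAssoc H Q.contractAlpha := by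
  ext a b c
  simp

theorem contractBetaAlpha_eq_comp_rTensorAssoc :
    Q.contractBetaAlpha = mulThrough Q.alpha ∘ₗ rTensorAssoc H Q.contractBeta := by
  ext a b c
  simp

theorem contractBetaAlphaLeft_eq_comp_rTensorAssoc :
    Q.contractBetaAlphaLeft =
      rTensorAssoc H (mulThrough Q.alpha) ∘ₗ rTensorAssoc (H ⊗[k] H) Q.contractBeta := by
  ext a b c d
  simp [contractBetaAlphaLeft, mul_assoc]

theorem contractBetaAlpha_Phi : Q.contractBetaAlpha Q.Phi = 1 := by
  obtain ⟨n, a, b, c, h⟩ := exists_sum_tmul_tmul_eq Q.Phi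
  simpa [h] using Q.antipode_Phi n a b c h

theorem contractAlphaBeta_PhiInv : Q.contractAlphaBeta Q.PhiInv = 1 := by
  obtain ⟨n, a, b, c, h⟩ := exists_sum_tmul_tmul_eq Q.PhiInv
  simpa [h] using Q.antipode_PhiInv n a b c h

theorem contractAlpha_comul (h : H) : Q.contractAlpha (Q.comul h) = Q.counit h • Q.alpha := by
  obtain ⟨n, a, b, hab⟩ := TensorProduct.exists_sum_tmul_eq (Q.comul h)
  simpa [hab] using Q.antipode_left h n a b hab

theorem contractBeta_comul (h : H) : Q.contractBeta (Q.comul h) = Q.counit h • Q.beta := by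
  obtain ⟨n, a, b, hab⟩ := TensorProduct.exists_sum_tmul_eq (Q.comul h)
  simpa [hab] using Q.antipode_right h n a b hab

theorem contractAlpha_mul_tmul (x : H ⊗[k] H) (a b : H) :
    Q.contractAlpha (x * a ⊗ₜ b) = Q.S a * Q.contractAlpha x * b := by
  induction x with
  | zero => simp
  | add x y hx hy => simp only [map_add, add_mul, mul_add, hx, hy]
  | tmul c d => simp [Q.S_mul, mul_assoc]

theorem contractBeta_tmul_mul (x : H ⊗[k] H) (a b : H) :
    Q.contractBeta (a ⊗ₜ b * x) = a * Q.contractBeta x * Q.S b := by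
  induction x with
  | zero => simp
  | add x y hx hy => simp only [map_add, add_mul, mul_add, hx, hy]
  | tmul c d => simp [Q.S_mul, mul_assoc]

theorem equalizesLeft_contractAlpha :
    EqualizesLeft Q.contractAlpha Q.comul (Q.scalarCounit _) := by
  intro h x
  induction x with
  | zero => simp
  | add x y hx hy => simp only [map_add, mul_add, hx, hy]
  | tmul a b =>
    rw [contractAlpha_mul_tmul, contractAlpha_comul, Q.scalarCounit_apply]
    simp

theorem equalizesRight_contractBeta :
    EqualizesRight Q.contractBeta Q.comul (Q.scalarCounit _) := by
  intro h x
  induction x with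
  | zero => simp
  | add x y hx hy => simp only [map_add, add_mul, hx, hy]
  | tmul a b =>
    rw [contractBeta_tmul_mul, contractBeta_comul, Q.scalarCounit_apply]
    simp

theorem equalizesLeft_contractAlphaBeta :
    EqualizesLeft Q.contractAlphaBeta (splitLeft H Q.comul) (splitLeft H (Q.scalarCounit _)) :=
  Q.contractAlphaBeta_eq_comp_rTensorAssoc ▸
    Q.equalizesLeft_contractAlpha.rTensorAssoc.comp Q.contractBeta

theorem equalizesRight_contractAlphaBeta :
    EqualizesRight Q.contractAlphaBeta (idTensor H Q.comul) (idTensor H (Q.scalarCounit _)) :=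
  Q.equalizesRight_contractBeta.lTensor.comp Q.contractAlpha

theorem equalizesLeft_contractBetaAlpha :
    EqualizesLeft Q.contractBetaAlpha (idTensor H Q.comul) (idTensor H (Q.scalarCounit _)) :=
  Q.equalizesLeft_contractAlpha.lTensor.comp (mulThrough Q.beta)

theorem equalizesRight_contractBetaAlpha :
    EqualizesRight Q.contractBetaAlpha (splitLeft H Q.comul) (splitLeft H (Q.scalarCounit _)) :=
  Q.contractBetaAlpha_eq_comp_rTensorAssoc ▸
    Q.equalizesRight_contractBeta.rTensorAssoc.comp (mulThrough Q.alpha)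

theorem equalizesLeft_contractBetaAlphaLeft :
    EqualizesLeft Q.contractBetaAlphaLeft (idTensor H (splitLeft H Q.comul))
      (idTensor H (splitLeft H (Q.scalarCounit _))) :=
  Q.equalizesLeft_contractAlpha.rTensorAssoc.lTensor.comp (rTensorAssoc H (mulThrough Q.beta))

theorem equalizesRight_contractBetaAlphaLeft :
    EqualizesRight Q.contractBetaAlphaLeft (splitLeft (H ⊗[k] H) Q.comul)
      (splitLeft (H ⊗[k] H) (Q.scalarCounit _)) :=
  Q.contractBetaAlphaLeft_eq_comp_rTensorAssoc ▸
    Q.equalizesRight_contractBeta.rTensorAssoc.comp (rTensorAssoc H (mulThrough Q.alpha))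

theorem lTensor_contractAlphaBeta_pentagon :
    Q.contractAlphaBeta.lTensor H (idTensor H (idTensor H Algebra.TensorProduct.includeLeft) Q.Phi *
        splitLeft (H ⊗[k] H) Q.comul Q.PhiInv) = 1 := by
  rw [Q.pentagon_slot123_mul_inv, Q.equalizesRight_contractAlphaBeta.lTensor, mul_assoc,
    Q.equalizesLeft_contractAlphaBeta.lTensor, Q.idTensor_idTensor_scalarCounit_Phi,
    Q.map_PhiInv_eq_one Q.idTensor_splitLeft_scalarCounit_Phi, mul_one, one_mul,
    LinearMap.lTensor_tmul, contractAlphaBeta_PhiInv, Algebra.TensorProduct.one_def]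

theorem lTensor_contractBetaAlpha_pentagon :
    Q.contractBetaAlpha.lTensor H (splitLeft (H ⊗[k] H) Q.comul Q.Phi *
        idTensor H (idTensor H Algebra.TensorProduct.includeLeft) Q.PhiInv) = 1 := by
  rw [Q.pentagon_comulLeft_mul_inv, Q.equalizesRight_contractBetaAlpha.lTensor, mul_assoc,
    Q.equalizesLeft_contractBetaAlpha.lTensor, Q.idTensor_splitLeft_scalarCounit_Phi,
    Q.map_PhiInv_eq_one Q.idTensor_idTensor_scalarCounit_Phi, mul_one, one_mul,
    LinearMap.lTensor_tmul, contractBetaAlpha_Phi, Algebra.TensorProduct.one_def]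

theorem contractBetaAlphaLeft_pentagon :
    Q.contractBetaAlphaLeft
      ((1 : H) ⊗ₜ Q.PhiInv * idTensor H (idTensor H Q.comul) Q.Phi) = 1 := by
  have h : Q.contractBetaAlphaLeft
      (idTensor H (idTensor H Algebra.TensorProduct.includeLeft) Q.Phi) =
      Q.contractBetaAlpha Q.Phi ⊗ₜ 1 := by
    obtain ⟨n, a, b, c, h⟩ := exists_sum_tmul_tmul_eq Q.Phi
    simp [h, contractBetaAlphaLeft, sum_tmul, mul_assoc]
  rw [Q.pentagon_inv_slot234_mul, Q.equalizesRight_contractBetaAlphaLeft, mul_assoc,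
    Q.equalizesLeft_contractBetaAlphaLeft, Q.idTensor_splitLeft_scalarCounit_Phi,
    Q.map_PhiInv_eq_one Q.splitLeft_scalarCounit_Phi, one_mul, mul_one, h, contractBetaAlpha_Phi,
    Algebra.TensorProduct.one_def]

end Contractions

section AltProjection

variable {k H B : Type*} [Field k] [Ring H] [Algebra k H] [Ring B] [Algebra k B]
  (Q : QuasiHopfAlgebra k H) (R : RightComoduleAlgebra Q.toQuasiBialgebra B) (v : H →ₐ[k] B)

/-- The action of `B ⊗ H` on `B` in which `b ⊗ h` acts as `t ↦ b t v(S(h))`. -/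
noncomputable def act : B ⊗[k] H →ₐ[k] Module.End k B :=
  Algebra.TensorProduct.lift (Algebra.lmul k B)
    (AlgHom.ofLinearMap ((LinearMap.mul k B).flip ∘ₗ v.toLinearMap ∘ₗ Q.S)
      (by ext; simp [Q.S_one]) (fun a b => by ext; simp [Q.S_mul, mul_assoc]))
    (fun _ _ => LinearMap.ext fun _ => (mul_assoc _ _ _).symm)

@[simp]
theorem act_tmul (b : B) (h : H) (t : B) : Q.act v (b ⊗ₜ h) t = b * t * v (Q.S h) := by
  exact (mul_assoc b t _).symm

/-- The map `Ē : b ↦ b₍₀₎ v(β S(b₍₁₎))`, which turns out to be `θ`. -/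
noncomputable def altProjection : B →ₗ[k] B :=
  LinearMap.applyₗ (v Q.beta) ∘ₗ (Q.act v).toLinearMap ∘ₗ R.coact.toLinearMap

theorem altProjection_apply (b : B) :
    Q.altProjection R v b = Q.act v (R.coact b) (v Q.beta) := rfl

theorem act_tensorId_beta (x : H ⊗[k] H) :
    Q.act v (tensorId H v x) (v Q.beta) = v (Q.contractBeta x) := by
  induction x with
  | zero => simp
  | add x y hx hy => simp only [map_add, LinearMap.add_apply, hx, hy]
  | tmul a b => simp

theorem altProjection_mul (a b : B) :
    Q.altProjection R v (a * b) = Q.act v (R.coact a) (Q.altProjection R v b) := by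
  simp [altProjection_apply]

theorem altProjection_one : Q.altProjection R v 1 = v Q.beta := by
  simp [altProjection_apply]

variable {R v}

theorem altProjection_map (hv : IsComodAlgMorphismFromH R v) (h : H) :
    Q.altProjection R v (v h) = Q.counit h • v Q.beta := by
  rw [altProjection_apply, hv.1, act_tensorId_beta, contractBeta_comul, map_smul]

theorem altProjection_mul_map (hv : IsComodAlgMorphismFromH R v) (b : B) (h : H) :
    Q.altProjection R v (b * v h) = Q.counit h • Q.altProjection R v b := by
  rw [altProjection_mul, Q.altProjection_map hv, map_smul, ← altProjection_apply]

theorem altProjection_map_mul (hv : IsComodAlgMorphismFromH R v) (h : H) (b : B) :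
    Q.altProjection R v (v h * b) =
      Q.act v (tensorId H v (Q.comul h)) (Q.altProjection R v b) := by
  rw [altProjection_mul, hv.1]

end AltProjection

section CanonicalProjection

variable {k H B : Type*} [Field k] [Ring H] [Algebra k H] [Ring B] [Algebra k B]
  {Q : QuasiHopfAlgebra k H} {R : RightComoduleAlgebra Q.toQuasiBialgebra B} {v : H →ₐ[k] B}
  {E : B →ₗ[k] B}

theorem canonicalProjection_eq_sandwich (hE : IsCanonicalProjection Q R v E) (b : B) :
    E b = sandwich v (Q.altProjection R v b) (Q.contractAlpha.lTensor H Q.Phi) := by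
  obtain ⟨n, X₁, X₂, X₃, hX⟩ := exists_sum_tmul_tmul_eq Q.Phi
  obtain ⟨m, b₀, b₁, hb⟩ := TensorProduct.exists_sum_tmul_eq (R.coact b)
  rw [hE b n X₁ X₂ X₃ hX m b₀ b₁ hb, altProjection_apply, hX, hb]
  simp [Finset.mul_sum, Finset.sum_mul, Q.S_mul, Q.S_Sinv, mul_assoc]

theorem sandwich_act_mul_map (t : B) (u : H ⊗[k] (H ⊗[k] H)) (x : H ⊗[k] H) (a b : H) :
    sandwich v (Q.act v (tensorId H v x) t) (Q.contractAlpha.lTensor H u) *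
        v (a * Q.beta * Q.S b) =
      sandwich v t (Q.contractAlphaBeta.lTensor H
        (idTensor H (idTensor H Algebra.TensorProduct.includeLeft) u *
          Algebra.TensorProduct.assoc k k k H H (H ⊗[k] H) (x ⊗ₜ (a ⊗ₜ b)))) := by
  obtain ⟨n, c, d, e, rfl⟩ := exists_sum_tmul_tmul_eq u
  obtain ⟨m, f, g, rfl⟩ := TensorProduct.exists_sum_tmul_eq x
  simp only [map_sum, Algebra.TensorProduct.map_tmul, AlgHom.coe_id, id_eq, LinearMap.coe_sum,
    Finset.sum_apply, act_tmul, mul_assoc, LinearMap.lTensor_tmul, contractAlpha_tmul,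
    sandwich_tmul, Finset.mul_sum, map_mul, Finset.sum_mul, Algebra.TensorProduct.includeLeft_apply,
    sum_tmul, Algebra.TensorProduct.assoc_tmul, Algebra.TensorProduct.tmul_mul_tmul, one_mul,
    contractAlphaBeta_tmul, Q.S_mul]
  exact Finset.sum_comm

theorem sum_canonicalProjection_mul_eq_altProjection (hv : IsComodAlgMorphismFromH R v)
    (hE : IsCanonicalProjection Q R v E) (b : B) {n : ℕ} {p₁ p₂ p₃ : Fin n → H}
    (hp : Q.PhiInv = ∑ i, p₁ i ⊗ₜ[k] (p₂ i ⊗ₜ[k] p₃ i)) :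
    ∑ i, E (v (p₁ i) * b) * v (p₂ i * Q.beta * Q.S (p₃ i)) = Q.altProjection R v b := by
  simp only [canonicalProjection_eq_sandwich hE, Q.altProjection_map_mul hv,
    sandwich_act_mul_map, ← splitLeft_tmul]
  rw [← map_sum, ← map_sum, ← Finset.mul_sum, ← map_sum, ← hp,
    Q.lTensor_contractAlphaBeta_pentagon, Algebra.TensorProduct.one_def]
  simp

end CanonicalProjection

section Coinvariance

variable {k H B : Type*} [Field k] [Ring H] [Algebra k H] [Ring B] [Algebra k B]
  {Q : QuasiHopfAlgebra k H} {R : RightComoduleAlgebra Q.toQuasiBialgebra B} {v : H →ₐ[k] B}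
  {E : B →ₗ[k] B}

theorem equalizesRight_altProjection (hv : IsComodAlgMorphismFromH R v) :
    EqualizesRight (Q.altProjection R v) v (Q.scalarCounit B) := by
  intro h b
  simp [Q.altProjection_mul_map hv, Q.scalarCounit_apply]

theorem rTensor_altProjection_mul_comul (hv : IsComodAlgMorphismFromH R v) (x : B ⊗[k] H)
    (h : H) :
    (Q.altProjection R v).rTensor H (x * tensorId H v (Q.comul h)) =
      (Q.altProjection R v).rTensor H x * 1 ⊗ₜ h := by
  have counit_left : Q.counitLeft H (Q.comul h) = h :=
    AlgHom.congr_fun Q.counitLeft_comp_comul h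
  rw [(equalizesRight_altProjection hv).rTensor, Q.tensorId_scalarCounit, AlgHom.comp_apply,
    counit_left]
  induction x with
  | zero => simp
  | add x y hx hy => simp only [map_add, add_mul, hx, hy]
  | tmul b g => simp

variable (Q R v) in
/-- The linear map `b ⊗ h ⊗ h' ⊗ h'' ↦ Ē(b) ⊗ h β S(h') α h''`, where `Ē` is `altProjection`. -/
noncomputable def altProjectionContract : B ⊗[k] (H ⊗[k] (H ⊗[k] H)) →ₗ[k] B ⊗[k] H :=
  TensorProduct.map (Q.altProjection R v) Q.contractBetaAlpha

@[simp]
theorem altProjectionContract_tmul (b : B) (z : H ⊗[k] (H ⊗[k] H)) :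
    altProjectionContract Q R v (b ⊗ₜ z) = Q.altProjection R v b ⊗ₜ Q.contractBetaAlpha z := rfl

theorem equalizesRight_altProjectionContract_map (hv : IsComodAlgMorphismFromH R v) :
    EqualizesRight (altProjectionContract Q R v) (tensorId _ v)
      (tensorId _ (Q.scalarCounit B)) := by
  have := (equalizesRight_altProjection hv).rTensor (D := H ⊗[k] (H ⊗[k] H)).comp
    (Q.contractBetaAlpha.lTensor B)
  rwa [LinearMap.lTensor_comp_rTensor] at this

theorem equalizesRight_altProjectionContract_comul :
    EqualizesRight (altProjectionContract Q R v) (idTensor B (splitLeft H Q.comul))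
      (idTensor B (splitLeft H (Q.scalarCounit _))) := by
  have := (Q.equalizesRight_contractBetaAlpha.lTensor (D := B)).comp
    ((Q.altProjection R v).rTensor H)
  rwa [LinearMap.rTensor_comp_lTensor] at this

theorem altProjectionContract_tensorId_mul_tmul_one (z : H ⊗[k] (H ⊗[k] (H ⊗[k] H))) (b : B) :
    altProjectionContract Q R v (tensorId _ v z * b ⊗ₜ 1) =
      (Q.altProjection R v).rTensor H
        (tensorId H v (Q.contractBetaAlpha.lTensor H z) * b ⊗ₜ 1) := by
  induction z with
  | zero => simp
  | add x y hx hy => simp only [map_add, add_mul, hx, hy]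
  | tmul h w => simp

theorem rTensor_altProjection_coact_mulThrough (hv : IsComodAlgMorphismFromH R v)
    (y : B ⊗[k] (H ⊗[k] H)) :
    (Q.altProjection R v).rTensor H (R.coact
      (mulThrough (v Q.beta) ((v.toLinearMap ∘ₗ Q.contractAlpha).lTensor B y))) =
      altProjectionContract Q R v (splitLeft (H ⊗[k] H) R.coact y) := by
  have contract_assoc (x : B ⊗[k] H) (g h : H) :
      altProjectionContract Q R v
        (Algebra.TensorProduct.assoc k k k B H (H ⊗[k] H) (x ⊗ₜ (g ⊗ₜ h))) =
      (Q.altProjection R v).rTensor H x * 1 ⊗ₜ (Q.beta * Q.S g * Q.alpha * h) := by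
    induction x with
    | zero => simp
    | add x y hx hy => simp only [map_add, add_tmul, add_mul, hx, hy]
    | tmul b c => simp [mul_assoc]
  obtain ⟨n, b, g, h, rfl⟩ := exists_sum_tmul_tmul_eq y
  simp only [map_sum]
  refine Finset.sum_congr rfl fun i _ => ?_
  rw [splitLeft_tmul, contract_assoc, ← rTensor_altProjection_mul_comul hv, ← hv.1, ← map_mul]
  simp [mul_assoc]

theorem canonicalProjection_eq_mulThrough (hE : IsCanonicalProjection Q R v E) (b : B) :
    E b = mulThrough (v Q.beta) ((v.toLinearMap ∘ₗ Q.contractAlpha).lTensor B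
      (tensorId _ v Q.Phi * idTensor B Algebra.TensorProduct.includeLeft (R.coact b))) := by
  obtain ⟨n, X₁, X₂, X₃, hX⟩ := exists_sum_tmul_tmul_eq Q.Phi
  obtain ⟨m, b₀, b₁, hb⟩ := TensorProduct.exists_sum_tmul_eq (R.coact b)
  rw [hE b n X₁ X₂ X₃ hX m b₀ b₁ hb, Finset.sum_comm, hX, hb]
  simp [Finset.mul_sum, Finset.sum_mul, Q.S_mul, Q.S_Sinv, mul_assoc]

theorem rTensor_altProjection_coact_canonicalProjection (hv : IsComodAlgMorphismFromH R v)
    (hE : IsCanonicalProjection Q R v E) (b : B) :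
    (Q.altProjection R v).rTensor H (R.coact (E b)) = Q.altProjection R v b ⊗ₜ 1 := by
  have middle : altProjectionContract Q R v
      (tensorId _ v (splitLeft (H ⊗[k] H) Q.comul Q.Phi *
          idTensor H (idTensor H Algebra.TensorProduct.includeLeft) Q.PhiInv) *
        idTensor B (splitLeft H Q.comul)
          (idTensor B Algebra.TensorProduct.includeLeft (R.coact b))) =
      Q.altProjection R v b ⊗ₜ 1 := by
    rw [equalizesRight_altProjectionContract_comul, R.idTensor_splitLeft_scalarCounit_coact,
      altProjectionContract_tensorId_mul_tmul_one, Q.lTensor_contractBetaAlpha_pentagon]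
    simp
  rw [canonicalProjection_eq_mulThrough hE, rTensor_altProjection_coact_mulThrough hv,
    R.splitLeft_coact_tensorId_Phi_mul hv, equalizesRight_altProjectionContract_map hv,
    Q.tensorId_scalarCounit, AlgHom.comp_apply, ← AlgHom.comp_apply (Q.counitLeft _),
    Q.counitLeft_comp_idTensor, AlgHom.comp_apply, Q.counitLeft_Phi, map_one, map_one, mul_one,
    middle]

theorem altProjection_canonicalProjection (hv : IsComodAlgMorphismFromH R v)
    (hE : IsCanonicalProjection Q R v E) (b : B) :
    Q.altProjection R v (E b) = Q.altProjection R v b := by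
  have counitRight_rTensor (x : B ⊗[k] H) :
      Q.counitRight B ((Q.altProjection R v).rTensor H x) =
        Q.altProjection R v (Q.counitRight B x) := by
    induction x with
    | zero => simp
    | add x y hx hy => simp only [map_add, hx, hy]
    | tmul b h => simp
  have := congrArg (Q.counitRight B)
    (rTensor_altProjection_coact_canonicalProjection hv hE b)
  simpa [counitRight_rTensor, R.counitRight_coact] using this

theorem canonicalProjection_idem (hv : IsComodAlgMorphismFromH R v)
    (hE : IsCanonicalProjection Q R v E) (b : B) : E (E b) = E b := by
  rw [canonicalProjection_eq_sandwich hE, altProjection_canonicalProjection hv hE,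
    ← canonicalProjection_eq_sandwich hE]

theorem canonicalProjection_eq_of_mem_range (hv : IsComodAlgMorphismFromH R v)
    (hE : IsCanonicalProjection Q R v E) {a : B} (ha : a ∈ LinearMap.range E) : E a = a := by
  obtain ⟨b, rfl⟩ := ha
  exact canonicalProjection_idem hv hE b

theorem rTensor_altProjection_coact_of_mem_range (hv : IsComodAlgMorphismFromH R v)
    (hE : IsCanonicalProjection Q R v E) {a : B} (ha : a ∈ LinearMap.range E) :
    (Q.altProjection R v).rTensor H (R.coact a) = Q.altProjection R v a ⊗ₜ 1 := by
  obtain ⟨b, rfl⟩ := ha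
  rw [rTensor_altProjection_coact_canonicalProjection hv hE,
    altProjection_canonicalProjection hv hE]

theorem injOn_altProjection (hv : IsComodAlgMorphismFromH R v)
    (hE : IsCanonicalProjection Q R v E) :
    Set.InjOn (Q.altProjection R v) (LinearMap.range E) := by
  intro a ha a' ha' h
  rw [← canonicalProjection_eq_of_mem_range hv hE ha,
    ← canonicalProjection_eq_of_mem_range hv hE ha', canonicalProjection_eq_sandwich hE, h,
    ← canonicalProjection_eq_sandwich hE]

end Coinvariance

section TwistedMul

variable {k H B : Type*} [Field k] [Ring H] [Algebra k H] [Ring B] [Algebra k B]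
  (Q : QuasiHopfAlgebra k H) {R : RightComoduleAlgebra Q.toQuasiBialgebra B} (v : H →ₐ[k] B)

/-- The linear map `b ⊗ d ⊗ e ⊗ f ↦ b v(S(d) α e) t v(S(f))`. The product `c ∘ t` of `B^v` is
its value at `(v ⊗ id)((1 ⊗ Φ⁻¹)(id ⊗ id ⊗ Δ)(Φ)) (c ⊗ 1)`. -/
noncomputable def twistedMul (t : B) : B ⊗[k] (H ⊗[k] (H ⊗[k] H)) →ₗ[k] B :=
  LinearMap.mul' k B ∘ₗ (LinearMap.applyₗ t ∘ₗ (Q.act v).toLinearMap ∘ₗ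
    (tensorId H v).toLinearMap ∘ₗ rTensorAssoc H Q.contractAlpha).lTensor B

@[simp]
theorem twistedMul_tmul (t b : B) (d e f : H) :
    Q.twistedMul v t (b ⊗ₜ (d ⊗ₜ (e ⊗ₜ f))) = b * v (Q.S d * Q.alpha * e) * t * v (Q.S f) := by
  simp [twistedMul, mul_assoc]

theorem equalizesLeft_twistedMul (t : B) :
    EqualizesLeft (Q.twistedMul v t) (idTensor B (splitLeft H Q.comul))
      (idTensor B (splitLeft H (Q.scalarCounit _))) :=
  (Q.equalizesLeft_contractAlpha.rTensorAssoc.comp (LinearMap.applyₗ t ∘ₗ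
    (Q.act v).toLinearMap ∘ₗ (tensorId H v).toLinearMap)).lTensor.comp (LinearMap.mul' k B)

theorem twistedMul_idTensor_includeRight_mul (t : B) (x : B ⊗[k] H)
    (w : B ⊗[k] (H ⊗[k] (H ⊗[k] H))) :
    Q.twistedMul v t (idTensor B (Algebra.TensorProduct.includeRight.comp
      Algebra.TensorProduct.includeRight) x * w) = Q.act v x (Q.twistedMul v t w) := by
  obtain ⟨n, b, d, y, rfl⟩ := exists_sum_tmul_tmul_eq w
  simp only [Finset.mul_sum, map_sum]
  refine Finset.sum_congr rfl fun i _ => ?_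
  induction x with
  | zero => simp
  | add x₁ x₂ h₁ h₂ => simp only [map_add, add_mul, LinearMap.add_apply, h₁, h₂]
  | tmul c h =>
    induction y i with
    | zero => simp
    | add y₁ y₂ h₁ h₂ => simp only [map_add, tmul_add, mul_add, h₁, h₂]
    | tmul e f => simp [Q.S_mul, mul_assoc]

theorem twistedMul_tensorId_mul_beta (t : B) (z : H ⊗[k] (H ⊗[k] (H ⊗[k] H))) :
    Q.twistedMul v t (tensorId _ v z * v Q.beta ⊗ₜ 1) =
      Q.act v (tensorId H v (Q.contractBetaAlphaLeft z)) t := by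
  induction z with
  | zero => simp
  | add z₁ z₂ h₁ h₂ => simp only [map_add, add_mul, LinearMap.add_apply, h₁, h₂]
  | tmul a y =>
    obtain ⟨n, b, c, d, rfl⟩ := exists_sum_tmul_tmul_eq y
    simp [contractBetaAlphaLeft, tmul_sum, Finset.sum_mul, mul_assoc]

theorem twistedMul_mul_assoc_mul_beta (t : B) (w : B ⊗[k] (H ⊗[k] (H ⊗[k] H)))
    (x : B ⊗[k] H) (y : H ⊗[k] H) :
    Q.twistedMul v t (w * Algebra.TensorProduct.assoc k k k B H (H ⊗[k] H) (x ⊗ₜ y) *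
        v Q.beta ⊗ₜ 1) =
      Q.twistedMul v t (w * Q.act v x (v Q.beta) ⊗ₜ (1 ⊗ₜ y)) := by
  induction x with
  | zero => simp
  | add x₁ x₂ h₁ h₂ =>
    simp only [map_add, mul_add, add_mul, add_tmul, LinearMap.add_apply, h₁, h₂]
  | tmul c h =>
    obtain ⟨n, b, d, u, rfl⟩ := exists_sum_tmul_tmul_eq w
    simp only [Finset.sum_mul, map_sum]
    refine Finset.sum_congr rfl fun i _ => ?_
    rw [Algebra.TensorProduct.assoc_tmul]
    simp only [Algebra.TensorProduct.tmul_mul_tmul, mul_one, act_tmul]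
    induction u i * y with
    | zero => simp
    | add y₁ y₂ h₁ h₂ => simp only [map_add, tmul_add, h₁, h₂]
    | tmul e f => simp [Q.S_mul, mul_assoc]

variable {Q v}

theorem twistedMul_splitLeft_coact_mul_beta (t : B) (w : B ⊗[k] (H ⊗[k] (H ⊗[k] H)))
    (y : B ⊗[k] H) :
    Q.twistedMul v t (w * idTensor B (idTensor H Q.comul) (splitLeft H R.coact y) *
        v Q.beta ⊗ₜ 1) =
      Q.twistedMul v t (w * idTensor B (Algebra.TensorProduct.includeRight.comp Q.comul)
        ((Q.altProjection R v).rTensor H y)) := by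
  rw [← AlgHom.comp_apply, idTensor_idTensor_comp_splitLeft]
  induction y with
  | zero => simp
  | add y₁ y₂ h₁ h₂ => simp only [map_add, mul_add, add_mul, h₁, h₂]
  | tmul b h =>
    simpa [splitLeft_tmul, altProjection_apply] using
      Q.twistedMul_mul_assoc_mul_beta v t w (R.coact b) (Q.comul h)

theorem twistedMul_mul_splitLeft_coact (hv : IsComodAlgMorphismFromH R v) (t b : B) :
    Q.twistedMul v t
        (tensorId _ v ((1 : H) ⊗ₜ Q.PhiInv * idTensor H (idTensor H Q.comul) Q.Phi) *
          idTensor B (idTensor H Q.comul) (splitLeft H R.coact (R.coact b)) * v Q.beta ⊗ₜ 1) =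
      Q.act v (R.coact b) t := by
  have counit (x : B ⊗[k] H) :
      idTensor B (splitLeft H (Q.scalarCounit (H ⊗[k] H))) (idTensor B Q.comul x) =
        idTensor B (Algebra.TensorProduct.includeRight.comp
          Algebra.TensorProduct.includeRight) x := by
    rw [← AlgHom.comp_apply, ← Algebra.TensorProduct.map_id_comp, Q.splitLeft_scalarCounit,
      AlgHom.comp_assoc, Q.counitLeft_comp_comul, AlgHom.comp_id]
  rw [R.tensorId_PhiInv_mul_splitLeft_coact hv, mul_assoc, equalizesLeft_twistedMul, counit,
    twistedMul_idTensor_includeRight_mul, twistedMul_tensorId_mul_beta,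
    Q.contractBetaAlphaLeft_pentagon, map_one, map_one, Module.End.one_apply]

theorem altProjection_mul_of_coinvariant (hv : IsComodAlgMorphismFromH R v) {a : B}
    (ha : (Q.altProjection R v).rTensor H (R.coact a) = Q.altProjection R v a ⊗ₜ 1) (b : B) :
    Q.altProjection R v (a * b) = Q.twistedMul v (Q.altProjection R v b)
      (tensorId _ v ((1 : H) ⊗ₜ Q.PhiInv * idTensor H (idTensor H Q.comul) Q.Phi) *
        Q.altProjection R v a ⊗ₜ 1) := by
  rw [altProjection_mul, ← twistedMul_mul_splitLeft_coact hv,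
    twistedMul_splitLeft_coact_mul_beta, ha, Algebra.TensorProduct.map_tmul, map_one,
    AlgHom.id_apply]

theorem twistedMul_eq_sum (c t : B) {nX nx mX : ℕ} {X₁ X₂ X₃ : Fin nX → H}
    (hX : Q.Phi = ∑ i, X₁ i ⊗ₜ[k] (X₂ i ⊗ₜ[k] X₃ i)) {C₁ C₂ : Fin nX → Fin mX → H}
    (hC : ∀ i, Q.comul (X₃ i) = ∑ j, C₁ i j ⊗ₜ[k] C₂ i j) {x₁ x₂ x₃ : Fin nx → H}
    (hx : Q.PhiInv = ∑ i, x₁ i ⊗ₜ[k] (x₂ i ⊗ₜ[k] x₃ i)) :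
    Q.twistedMul v t
        (tensorId _ v ((1 : H) ⊗ₜ Q.PhiInv * idTensor H (idTensor H Q.comul) Q.Phi) * c ⊗ₜ 1) =
      ∑ i, ∑ j, ∑ l, v (X₁ i) * c * v (Q.S (x₁ l * X₂ i) * Q.alpha * x₂ l * C₁ i j) * t *
        v (Q.S (x₃ l * C₂ i j)) := by
  rw [hX, hx]
  simp [hC, tmul_sum, Finset.mul_sum, Finset.sum_mul, mul_assoc]

end TwistedMul

end QuasiHopfAlgebra

/-- The map `θ : A → B^v`, `θ(a) = (p¹ ▷ a) v(p²)` with `p_R = x¹ ⊗ x²βS(x³)`, is an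
injective morphism of left `H`-module algebras from `(A, *, 1_B, ▷)` to `B^v` (whose
multiplication is `b ∘ b' = v(X¹) b v(S(x¹X²)αx²X³₁) b' v(S(x³X³₂))`, unit `v(β)` and
action `h ▷ᵥ b = v(h₁) b v(S(h₂))`). -/
theorem statement5 {k H B : Type*} [Field k] [Ring H] [Algebra k H]
    [Ring B] [Algebra k B] (Q : QuasiHopfAlgebra k H)
    (R : RightComoduleAlgebra Q.toQuasiBialgebra B)
    (v : H →ₐ[k] B) (hv : IsComodAlgMorphismFromH R v)
    (E : B →ₗ[k] B) (hE : IsCanonicalProjection Q R v E)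
    (theta : B → B)
    (htheta : ∀ (b : B) (n : ℕ) (p1 p2 p3 : Fin n → H),
      Q.PhiInv = ∑ i, p1 i ⊗ₜ[k] (p2 i ⊗ₜ[k] p3 i) →
      theta b = ∑ i, E (v (p1 i) * b) * v (p2 i * Q.beta * Q.S (p3 i))) :
    -- θ is injective on A = E(B):
    (∀ a ∈ LinearMap.range E, ∀ a' ∈ LinearMap.range E, theta a = theta a' → a = a')
    -- θ is unital: θ(1_A) = v(β) = 1_{B^v}:
    ∧ (theta (1 : B) = v Q.beta)
    -- θ is multiplicative: θ(a * a') = θ(a) ∘ θ(a') in B^v: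
    ∧ (∀ a ∈ LinearMap.range E, ∀ a' ∈ LinearMap.range E,
        ∀ (nX : ℕ) (X1 X2 X3 : Fin nX → H),
        Q.Phi = ∑ i, X1 i ⊗ₜ[k] (X2 i ⊗ₜ[k] X3 i) →
        ∀ (mX : ℕ) (C1 C2 : Fin nX → Fin mX → H),
        (∀ i, Q.comul (X3 i) = ∑ j, C1 i j ⊗ₜ[k] C2 i j) →
        ∀ (nx : ℕ) (x1 x2 x3 : Fin nx → H),
        Q.PhiInv = ∑ i, x1 i ⊗ₜ[k] (x2 i ⊗ₜ[k] x3 i) →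
        theta (E (a * a'))
          = ∑ i, ∑ j, ∑ ix,
              v (X1 i) * theta a * v (Q.S (x1 ix * X2 i) * Q.alpha * x2 ix * C1 i j)
                * theta a' * v (Q.S (x3 ix * C2 i j)))
    -- θ is H-linear: θ(h ▷ a) = h ▷ᵥ θ(a):
    ∧ (∀ a ∈ LinearMap.range E, ∀ (h : H) (m : ℕ) (d1 d2 : Fin m → H),
        Q.comul h = ∑ j, d1 j ⊗ₜ[k] d2 j →
        theta (E (v h * a)) = ∑ j, v (d1 j) * theta a * v (Q.S (d2 j))) := by
  have theta_eq (b : B) : theta b = Q.altProjection R v b := by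
    obtain ⟨n, p₁, p₂, p₃, hp⟩ := QuasiHopf.exists_sum_tmul_tmul_eq Q.PhiInv
    rw [htheta b n p₁ p₂ p₃ hp]
    exact QuasiHopfAlgebra.sum_canonicalProjection_mul_eq_altProjection hv hE b hp
  simp only [theta_eq, QuasiHopfAlgebra.altProjection_canonicalProjection hv hE]
  refine ⟨fun a ha a' ha' h => QuasiHopfAlgebra.injOn_altProjection hv hE ha ha' h,
    Q.altProjection_one R v, ?mul, ?linear⟩
  case mul =>
    intro a ha a' _ nX X₁ X₂ X₃ hX mX C₁ C₂ hC nx x₁ x₂ x₃ hx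
    rw [QuasiHopfAlgebra.altProjection_mul_of_coinvariant hv
      (QuasiHopfAlgebra.rTensor_altProjection_coact_of_mem_range hv hE ha)]
    exact QuasiHopfAlgebra.twistedMul_eq_sum _ _ hX hC hx
  case linear =>
    intro a _ h m d₁ d₂ hd
    rw [Q.altProjection_map_mul hv, hd]
    simp
end

section
/- Let H be a quasi-Hopf algebra, B a right H-comodule algebra, and v : H → B a morphism of right H-comodule algebras. Define E : B → B by E(b) = v(q¹)b₍₀₎v(βS(q²b₍₁₎)). Then for every h ∈ H, E(v(h)) = ε(h)1_B; that is, h▷1_B = ε(h)1_B for the action h▷b = E(v(h)b). -/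
open TensorProduct BigOperators

/-!
The map `b ⊗ h ↦ b v(β S(h))` sends `(v ⊗ id)(q_R) ρ(b)` to `E(b)`. Since `h₁ β S(h₂) = ε(h) β`, it
turns right multiplication by `(v ⊗ id)(Δ(h))`, which is `ρ(v(h))`, into multiplication by the
scalar `ε(h)`; hence `E(b v(h)) = ε(h) E(b)`. Since `S(q²) = S(X²) α X³`, the axiom
`X¹ β S(X²) α X³ = 1` says that `E(1) = 1`.
-/

theorem exists_sum_tmul_tmul_eq {k M N P : Type*} [CommSemiring k] [AddCommMonoid M] [Module k M]
    [AddCommMonoid N] [Module k N] [AddCommMonoid P] [Module k P] (x : M ⊗[k] (N ⊗[k] P)) :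
    ∃ (n : ℕ) (a : Fin n → M) (b : Fin n → N) (c : Fin n → P),
      x = ∑ i, a i ⊗ₜ[k] (b i ⊗ₜ[k] c i) := by
  obtain ⟨n, a, y, rfl⟩ := TensorProduct.exists_sum_tmul_eq x
  choose m b c hy using fun i => TensorProduct.exists_sum_tmul_eq (y i)
  refine ⟨∑ i, m i, fun j => a (finSigmaFinEquiv.symm j).1,
    fun j => b _ (finSigmaFinEquiv.symm j).2, fun j => c _ (finSigmaFinEquiv.symm j).2, ?_⟩
  rw [finSigmaFinEquiv.symm.sum_comp fun j => a j.1 ⊗ₜ[k] (b j.1 j.2 ⊗ₜ[k] c j.1 j.2),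
    Fintype.sum_sigma]
  exact Finset.sum_congr rfl fun i _ => by rw [hy i, TensorProduct.tmul_sum]

namespace QuasiHopfAlgebra

variable {k H B : Type*} [Field k] [Ring H] [Algebra k H] [Ring B] [Algebra k B]
  (Q : QuasiHopfAlgebra k H) (v : H →ₐ[k] B)

/-- The element `q_R = X¹ ⊗ S⁻¹(α X³) X²`, as the image of `Φ = X¹ ⊗ X² ⊗ X³` under a linear map. -/
noncomputable def qR : H ⊗[k] H :=
  (TensorProduct.lift ((LinearMap.mul k H).flip.compl₂
    (Q.Sinv ∘ₗ LinearMap.mulLeft k Q.alpha))).lTensor H Q.Phi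

/-- The linear map `b ⊗ h ↦ b v(β S(h))`, through which both the antipode axioms and the projection
`E` factor. -/
noncomputable def betaContraction : B ⊗[k] H →ₗ[k] B :=
  TensorProduct.lift ((LinearMap.mul k B).compl₂
    (v.toLinearMap ∘ₗ LinearMap.mulLeft k Q.beta ∘ₗ Q.S))

theorem qR_eq_sum {n : ℕ} {X1 X2 X3 : Fin n → H}
    (hPhi : Q.Phi = ∑ i, X1 i ⊗ₜ[k] (X2 i ⊗ₜ[k] X3 i)) :
    Q.qR = ∑ i, X1 i ⊗ₜ[k] (Q.Sinv (Q.alpha * X3 i) * X2 i) := by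
  simp [qR, hPhi]

@[simp]
theorem betaContraction_tmul (b : B) (h : H) :
    Q.betaContraction v (b ⊗ₜ[k] h) = b * v (Q.beta * Q.S h) :=
  rfl

theorem betaContraction_mul_map_comul (t : B ⊗[k] H) (h : H) :
    Q.betaContraction v (t * Algebra.TensorProduct.map v (AlgHom.id k H) (Q.comul h))
      = Q.counit h • Q.betaContraction v t := by
  induction t using TensorProduct.induction_on with
  | zero => simp only [zero_mul, map_zero, smul_zero]
  | add s t hs ht => rw [add_mul, map_add, map_add, smul_add, hs, ht]
  | tmul b x =>
    obtain ⟨n, d1, d2, hd⟩ := TensorProduct.exists_sum_tmul_eq (Q.comul h)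
    have h_beta := Q.antipode_right h n d1 d2 hd
    calc Q.betaContraction v
          (b ⊗ₜ[k] x * Algebra.TensorProduct.map v (AlgHom.id k H) (Q.comul h))
        = ∑ j, b * v (d1 j * Q.beta * Q.S (d2 j) * Q.S x) := by
          simp [hd, Finset.mul_sum, Q.S_mul, mul_assoc]
      _ = b * v ((∑ j, d1 j * Q.beta * Q.S (d2 j)) * Q.S x) := by
          rw [Finset.sum_mul, map_sum, Finset.mul_sum]
      _ = Q.counit h • Q.betaContraction v (b ⊗ₜ[k] x) := by
          rw [h_beta, smul_mul_assoc, map_smul, mul_smul_comm, betaContraction_tmul]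

theorem betaContraction_map_qR :
    Q.betaContraction v (Algebra.TensorProduct.map v (AlgHom.id k H) Q.qR) = 1 := by
  obtain ⟨n, X1, X2, X3, hPhi⟩ := exists_sum_tmul_tmul_eq Q.Phi
  calc Q.betaContraction v (Algebra.TensorProduct.map v (AlgHom.id k H) Q.qR)
      = v (∑ i, X1 i * Q.beta * Q.S (X2 i) * Q.alpha * X3 i) := by
        simp [Q.qR_eq_sum hPhi, Q.S_mul, Q.S_Sinv, mul_assoc]
    _ = 1 := by rw [Q.antipode_Phi n X1 X2 X3 hPhi, map_one]

end QuasiHopfAlgebra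

namespace IsCanonicalProjection

variable {k H B : Type*} [Field k] [Ring H] [Algebra k H] [Ring B] [Algebra k B]
  {Q : QuasiHopfAlgebra k H} {R : RightComoduleAlgebra Q.toQuasiBialgebra B}
  {v : H →ₐ[k] B} {E : B →ₗ[k] B}

theorem apply_eq_betaContraction (hE : IsCanonicalProjection Q R v E) (b : B) :
    E b = Q.betaContraction v
      (Algebra.TensorProduct.map v (AlgHom.id k H) Q.qR * R.coact b) := by
  obtain ⟨n, X1, X2, X3, hPhi⟩ := exists_sum_tmul_tmul_eq Q.Phi
  obtain ⟨p, b0, b1, hb⟩ := TensorProduct.exists_sum_tmul_eq (R.coact b)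
  rw [hE b n X1 X2 X3 hPhi p b0 b1 hb]
  simp [Q.qR_eq_sum hPhi, hb, Finset.sum_mul_sum]

theorem apply_one (hE : IsCanonicalProjection Q R v E) : E 1 = 1 := by
  rw [hE.apply_eq_betaContraction, map_one, mul_one, Q.betaContraction_map_qR]

theorem apply_mul_map (hE : IsCanonicalProjection Q R v E) {h : H}
    (hv : R.coact (v h) = Algebra.TensorProduct.map v (AlgHom.id k H) (Q.comul h)) (b : B) :
    E (b * v h) = Q.counit h • E b := by
  rw [hE.apply_eq_betaContraction, hE.apply_eq_betaContraction, map_mul R.coact, hv, ← mul_assoc,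
    Q.betaContraction_mul_map_comul]

end IsCanonicalProjection

theorem statement10_general {k H B : Type*} [Field k] [Ring H] [Algebra k H]
    [Ring B] [Algebra k B] (Q : QuasiHopfAlgebra k H)
    (R : RightComoduleAlgebra Q.toQuasiBialgebra B) (v : H →ₐ[k] B)
    (hv : ∀ h : H, R.coact (v h) = Algebra.TensorProduct.map v (AlgHom.id k H) (Q.comul h))
    (E : B →ₗ[k] B) (hE : IsCanonicalProjection Q R v E) (h : H) :
    E (v h) = Q.counit h • (1 : B) := by
  rw [← one_mul (v h), hE.apply_mul_map (hv h), hE.apply_one]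

/-- `E(v(h)) = ε(h)1_B`, i.e. `h ▷ 1_B = ε(h)1_B` for the action `h ▷ b = E(v(h)b)`. -/
theorem statement10 {k H B : Type*} [Field k] [Ring H] [Algebra k H]
    [Ring B] [Algebra k B] (Q : QuasiHopfAlgebra k H)
    (R : RightComoduleAlgebra Q.toQuasiBialgebra B)
    (v : H →ₐ[k] B) (hv : IsComodAlgMorphismFromH R v)
    (E : B →ₗ[k] B) (hE : IsCanonicalProjection Q R v E) :
    ∀ h : H, E (v h) = Q.counit h • (1 : B) :=
  statement10_general Q R v hv.1 E hE
end
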